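/- Let y be either a two-sided infinite word over A, or a recurrent one-sided infinite word over A. Let D be a positive integer and let M be a D-marker set for y. Then there exist languages S, T ⊆ A* such that Fac(y) ⊆ S T and, for every n ≥ 2D, p_S(n) ≤ Σ_{k ∈ I_n ∩ ℕ} p_M(2^k)·(1 + 4 p_y(3n)/2^k) and p_T(n) ≤ Σ_{k ∈ I_n ∩ ℕ} p_M(2^k)·(1 + 4 p_y(3n)/2^k), where I_n is the half-open interval (log₂(n/(2D)), log₂(2n)]. -/

import Mathlib

open scoped ENNReal Pointwise

universe u

variable {A : Type u}

/-- The factor of `x` of length `n` starting at position `i`. -/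
def wordSeg (x : ℕ → A) (i n : ℕ) : List A := (List.range n).map fun j => x (i + j)

/-- The set of finite factors of a one-sided infinite word (including the empty word). -/
def Fac (x : ℕ → A) : Set (List A) := {u | ∃ i n, u = wordSeg x i n}

/-- The factor of a two-sided word `x` of length `n` starting at position `i`. -/
def wordSegZ (x : ℤ → A) (i : ℤ) (n : ℕ) : List A := (List.range n).map fun j => x (i + j)

/-- The set of finite factors of a two-sided infinite word (including the empty word). -/
def FacZ (x : ℤ → A) : Set (List A) := {u | ∃ (i : ℤ) (n : ℕ), u = wordSegZ x i n}

/-- The complexity of a language: the number of words of length `n` in it. -/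
noncomputable def complexity (L : Set (List A)) (n : ℕ) : ℕ :=
  {u ∈ L | u.length = n}.ncard

/-- The accumulative complexity `p*_L(n) = Σ_{i=0}^{n} p_L(i)`. -/
noncomputable def accComplexity (L : Set (List A)) (n : ℕ) : ℕ :=
  ∑ i ∈ Finset.range (n + 1), complexity L i

/-- Concatenation (product) of two languages. -/
def prodL (S T : Set (List A)) : Set (List A) := {w | ∃ s ∈ S, ∃ t ∈ T, w = s ++ t}

/-- `powL S k` = `S^k`, the set of concatenations of `k` elements of `S`. -/
def powL (S : Set (List A)) : ℕ → Set (List A)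
  | 0 => {([] : List A)}
  | k + 1 => prodL (powL S k) S

/-- `f(n) = O(n^α)`. -/
def PolyBound (f : ℕ → ℕ) (α : ℝ) : Prop :=
  ∃ C : ℝ, ∀ n : ℕ, 1 ≤ n → (f n : ℝ) ≤ C * (n : ℝ) ^ α

/-- The `α`-dimension `d_α(L)`: infimum of the integers `k ≥ 1` such that `L ⊆ S^k`
for some language `S` with `p_S(n) = O(n^α)`, with `inf ∅ = ⊤`. -/
noncomputable def polyDim (α : ℝ) (L : Set (List A)) : ℕ∞ :=
  sInf {k : ℕ∞ | ∃ m : ℕ, k = m ∧ 1 ≤ m ∧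
    ∃ S : Set (List A), PolyBound (complexity S) α ∧ L ⊆ powL S m}

/-- The accumulative `α`-dimension `d*_α(L)`. -/
noncomputable def polyDimStar (α : ℝ) (L : Set (List A)) : ℕ∞ :=
  sInf {k : ℕ∞ | ∃ m : ℕ, k = m ∧ 1 ≤ m ∧
    ∃ S : Set (List A), PolyBound (accComplexity S) α ∧ L ⊆ powL S m}

/-- The cost `c(L)`: infimum of the `α ≥ 0` with `d_α(L) < +∞`, with `inf ∅ = ⊤`. -/
noncomputable def cost (L : Set (List A)) : ℝ≥0∞ :=
  sInf {a : ℝ≥0∞ | ∃ α : ℝ, 0 ≤ α ∧ a = ENNReal.ofReal α ∧ polyDim α L ≠ ⊤}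

/-- A one-sided word is ultimately periodic if it is of the form `u v v v ⋯`. -/
def UltimatelyPeriodic (x : ℕ → A) : Prop :=
  ∃ N p : ℕ, 0 < p ∧ ∀ n : ℕ, N ≤ n → x (n + p) = x n

/-- A two-sided word is eventually periodic if it is periodic far enough to the right
and far enough to the left. -/
def EventuallyPeriodicZ (x : ℤ → A) : Prop :=
  (∃ p : ℕ, 0 < p ∧ ∃ N : ℤ, ∀ n : ℤ, N ≤ n → x (n + p) = x n) ∧
  (∃ p : ℕ, 0 < p ∧ ∃ N : ℤ, ∀ n : ℤ, n ≤ N → x (n - p) = x n)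

/-- A one-sided word is recurrent if each of its factors occurs infinitely often. -/
def Recurrent (x : ℕ → A) : Prop :=
  ∀ u ∈ Fac x, ∀ N : ℕ, ∃ i : ℕ, N ≤ i ∧ u = wordSeg x i u.length

/-- `u` is a right special factor for the language `F`. -/
def RightSpecial (F : Set (List A)) (u : List A) : Prop :=
  u ∈ F ∧ ∃ a b : A, a ≠ b ∧ u ++ [a] ∈ F ∧ u ++ [b] ∈ F

/-- `M` is a `D`-marker set for a word with factor set `F`: every factor of length
at least `D n` contains a factor of length `n` belonging to `M`. -/
def MarkerSet (D : ℕ) (M F : Set (List A)) : Prop :=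
  ∀ n : ℕ, 1 ≤ n → ∀ u ∈ F, D * n ≤ u.length →
    ∃ v ∈ M, v.length = n ∧ v <:+: u

/-- A language is factorial if it contains all factors of its members. -/
def IsFactorial (S : Set (List A)) : Prop := ∀ u ∈ S, ∀ v : List A, v <:+: u → v ∈ S

/-- The bound `Σ_{k ∈ I_n ∩ ℕ} p_M(2^k)(1 + 4 p(3n)/2^k)` where
`I_n = (log₂(n/(2D)), log₂(2n)]`, i.e. the sum is over natural `k` with
`n/(2D) < 2^k ≤ 2n`. -/
noncomputable def markerBound (M F : Set (List A)) (D n : ℕ) : ℝ :=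
  ∑ k ∈ (Finset.range (2 * n + 2)).filter (fun k => n < 2 * D * 2 ^ k ∧ 2 ^ k ≤ 2 * n),
    (complexity M (2 ^ k) : ℝ) * (1 + 4 * (complexity F (3 * n) : ℝ) / 2 ^ k)

-- The word `u = ∏_{i=1}^{∞} a b^i = a b a b b a b b b ⋯` over `{a,b}`, with
-- `a = false`, `b = true`: position `n` carries an `a` iff `n = (i-1)(i+2)/2` for some
-- `i ≥ 1`, i.e. iff `2n = m(m+3)` for some `m ≥ 0`.
open Classical in
noncomputable def uWord (n : ℕ) : Bool :=
  if ∃ m : ℕ, 2 * n = m * (m + 3) then false else true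

/-!
A word `u` of length at least `2D` contains a marker `m` of length `2 ^ k = 2H`, where `D * 2 ^ k ≤
|u| < 2D * 2 ^ k`, and is cut in the middle of an occurrence of `m`. Let `d` be the least period of
`m`. If `d ≥ H`, any two occurrences of `m` are at distance at least `H`. If `d < H`, two
occurrences at distance less than `H` lie in a common `d`-periodic factor, so the occurrences at
which the `d`-periodicity breaks within `d` letters to the left are still at distance at least `H`,
and likewise to the right. The cut is made at an occurrence broken on the left if there is one, and
at the last occurrence of `m` otherwise; each of the two pieces is then either part of a
`d`-periodic word, hence determined by `m` and its length, or comes with an occurrence from a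
family of separated ones. A piece of the latter kind and length `n` can be placed at `H` different
positions in words of length `3n`, and separation makes these words distinct for distinct pieces or
positions, so there are at most `p(3n) / H` such pieces on either side.
-/

section Occurrences

variable {m e v : List A} {p q : ℕ}

/-- The word `m` occurs in `v` at position `p`. -/
def OccursAt (m v : List A) (p : ℕ) : Prop := m <+: v.drop p

lemma occursAt_iff_getElem? : OccursAt m v p ↔ ∀ i < m.length, v[p + i]? = m[i]? := by
  simp only [OccursAt, List.prefix_iff_getElem?, List.getElem?_drop]
  exact forall₂_congr fun i hi => by rw [List.getElem?_eq_getElem hi]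

lemma exists_occursAt_of_isInfix (h : m <:+: v) : ∃ p, OccursAt m v p := by
  obtain ⟨l, r, rfl⟩ := h
  exact ⟨l.length, by simp [OccursAt]⟩

lemma OccursAt.add_length_le (h : OccursAt m v p) (hm : m ≠ []) : p + m.length ≤ v.length := by
  have := h.length_le
  have := List.length_pos_iff.2 hm
  rw [List.length_drop] at *
  omega

lemma OccursAt.take_drop_eq (h : OccursAt m v p) : (v.drop p).take m.length = m :=
  (List.prefix_iff_eq_take.1 h).symm

lemma OccursAt.take (h : OccursAt m v p) : OccursAt m (v.take (p + m.length)) p := by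
  rw [OccursAt, List.drop_take, Nat.add_sub_cancel_left, h.take_drop_eq]

lemma occursAt_drop {k : ℕ} : OccursAt m (v.drop k) p ↔ OccursAt m v (k + p) := by
  rw [OccursAt, OccursAt, List.drop_drop]

lemma OccursAt.append (h : OccursAt m e p) (l r : List A) :
    OccursAt m (l ++ e ++ r) (l.length + p) := by
  rw [← occursAt_drop, List.append_assoc, List.drop_left]
  exact h.trans ((e.prefix_append r).drop p)

lemma OccursAt.eq_of_length_eq {s t : List A} (hs : OccursAt s v p) (ht : OccursAt t v p)
    (h : s.length = t.length) : s = t := by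
  rw [← hs.take_drop_eq, h, ht.take_drop_eq]

lemma OccursAt.of_getElem?_eq (h : OccursAt m v p)
    (hpq : ∀ i < m.length, v[q + i]? = v[p + i]?) : OccursAt m v q := by
  rw [occursAt_iff_getElem?] at h ⊢
  exact fun i hi => (hpq i hi).trans (h i hi)

end Occurrences

section Periods

variable {m v e w : List A} {d a a' b b' p q : ℕ}

/-- `d` is a period of the part of `v` occupying the positions `a, …, b - 1`; positions past the
end of `v` are ignored. -/
def PeriodicOn (v : List A) (d a b : ℕ) : Prop := ((v.take b).drop a).HasPeriod d

lemma periodicOn_iff_getElem? :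
    PeriodicOn v d a b ↔ ∀ i, a ≤ i → i + d < b → i + d < v.length → v[i]? = v[i + d]? := by
  simp only [PeriodicOn, List.hasPeriod_iff_getElem?, List.length_drop, List.length_take,
    List.getElem?_drop]
  refine ⟨fun h i hi hib hiv => ?_, fun h i hi => ?_⟩
  · have := h (i - a) (by omega)
    rwa [← add_assoc, Nat.add_sub_of_le hi, List.getElem?_take_of_lt (by omega),
      List.getElem?_take_of_lt hib] at this
  · rw [← add_assoc, List.getElem?_take_of_lt (by omega), List.getElem?_take_of_lt (by omega)]
    exact h (a + i) (by omega) (by omega) (by omega)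

lemma PeriodicOn.mono (h : PeriodicOn v d a b) (ha : a ≤ a') (hb : b' ≤ b) :
    PeriodicOn v d a' b' := by
  rw [periodicOn_iff_getElem?] at h ⊢
  exact fun i hi hib => h i (ha.trans hi) (hib.trans_le hb)

lemma PeriodicOn.trans (h : PeriodicOn v d a b) (h' : PeriodicOn v d a' b') (hab : a' + d ≤ b) :
    PeriodicOn v d a b' := by
  rw [periodicOn_iff_getElem?] at h h' ⊢
  intro i hi hib hiv
  by_cases hc : a' ≤ i
  · exact h' i hc hib hiv
  · exact h i hi (by omega) hiv

lemma periodicOn_drop {k : ℕ} : PeriodicOn (v.drop k) d a b ↔ PeriodicOn v d (k + a) (k + b) := by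
  rw [PeriodicOn, PeriodicOn, List.take_drop, List.drop_drop]

lemma PeriodicOn.of_append {l r : List A}
    (h : PeriodicOn (l ++ e ++ r) d (l.length + a) (l.length + b)) : PeriodicOn e d a b := by
  rw [← periodicOn_drop, List.append_assoc, List.drop_left] at h
  exact h.infix (((e.prefix_append r).take b).drop a).isInfix

lemma OccursAt.periodicOn_iff (h : OccursAt m v p) :
    PeriodicOn v d p (p + m.length) ↔ m.HasPeriod d := by
  rw [PeriodicOn, List.drop_take, Nat.add_sub_cancel_left, h.take_drop_eq]

lemma OccursAt.add_of_periodicOn (h : OccursAt m v p)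
    (hper : PeriodicOn v d p (p + m.length + d)) (hv : p + m.length + d ≤ v.length) :
    OccursAt m v (p + d) :=
  h.of_getElem?_eq fun i hi => by
    rw [periodicOn_iff_getElem?.1 hper (p + i) (by omega) (by omega) (by omega),
      add_right_comm]

lemma OccursAt.sub_of_periodicOn (h : OccursAt m v p) (hm : m ≠ [])
    (hper : PeriodicOn v d (p - d) (p + m.length)) (hd : d ≤ p) : OccursAt m v (p - d) :=
  h.of_getElem?_eq fun i hi => by
    have := h.add_length_le hm
    rw [periodicOn_iff_getElem?.1 hper (p - d + i) (by omega) (by omega) (by omega),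
      add_right_comm, Nat.sub_add_cancel hd]

/-- The least positive period of a word. -/
noncomputable def minPeriod (m : List A) : ℕ := sInf {d | 0 < d ∧ m.HasPeriod d}

lemma length_mem_periods (hm : m ≠ []) : m.length ∈ {d | 0 < d ∧ m.HasPeriod d} :=
  ⟨List.length_pos_iff.2 hm, m.hasPeriod_of_length_le _ le_rfl⟩

lemma minPeriod_pos (hm : m ≠ []) : 0 < minPeriod m :=
  (Nat.sInf_mem ⟨_, length_mem_periods hm⟩).1

lemma hasPeriod_minPeriod (hm : m ≠ []) : m.HasPeriod (minPeriod m) :=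
  (Nat.sInf_mem ⟨_, length_mem_periods hm⟩).2

lemma minPeriod_le_length (hm : m ≠ []) : minPeriod m ≤ m.length :=
  Nat.sInf_le (length_mem_periods hm)

lemma minPeriod_le (hd : 0 < d) (h : m.HasPeriod d) : minPeriod m ≤ d :=
  Nat.sInf_le ⟨hd, h⟩

lemma OccursAt.hasPeriod_sub (hp : OccursAt m v p) (hq : OccursAt m v q) (hpq : p ≤ q) :
    m.HasPeriod (q - p) := by
  rw [occursAt_iff_getElem?] at hp hq
  refine List.hasPeriod_iff_getElem?.2 fun i hi => ?_
  rw [← hq i (by omega), ← hp (i + (q - p)) (by omega)]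
  congr 1
  omega

lemma OccursAt.minPeriod_le_sub (hp : OccursAt m v p) (hq : OccursAt m v q) (hpq : p < q) :
    minPeriod m ≤ q - p :=
  minPeriod_le (Nat.sub_pos_of_lt hpq) (hp.hasPeriod_sub hq hpq.le)

lemma OccursAt.periodicOn_minPeriod_of_overlap (hp : OccursAt m v p) (hq : OccursAt m v q)
    (hm : m ≠ []) (hpq : q + minPeriod m ≤ p + m.length) :
    PeriodicOn v (minPeriod m) p (q + m.length) :=
  (hp.periodicOn_iff.2 (hasPeriod_minPeriod hm)).trans
    (hq.periodicOn_iff.2 (hasPeriod_minPeriod hm)) hpq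

lemma OccursAt.getElem?_eq_of_hasPeriod (h : OccursAt m w p) (hw : w.HasPeriod d) (hd : 0 < d)
    (hdm : d ≤ m.length) {k : ℕ} (hk : k < w.length) :
    w[k]? = m[(((k : ℤ) - p) % d).toNat]? := by
  have hm : m ≠ [] := List.ne_nil_of_length_pos (hd.trans_le hdm)
  have hpw := h.add_length_le hm
  have hd' : (0 : ℤ) < d := by exact_mod_cast hd
  obtain ⟨x, hx⟩ := Int.eq_ofNat_of_zero_le (Int.emod_nonneg ((k : ℤ) - p) hd'.ne')
  have hxd : x < d := by
    have := Int.emod_lt_of_pos ((k : ℤ) - p) hd'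
    omega
  have hmod : k % d = (p + x) % d := by
    zify
    rw [← hx, Int.add_emod_emod, add_sub_cancel]
  rw [hx, Int.toNat_natCast, ← occursAt_iff_getElem?.1 h x (by omega),
    ← hw.getElem?_mod _ _ _ hk, hmod, hw.getElem?_mod _ _ _ (by omega)]

end Periods

section Marking

variable {m v : List A} {H p q : ℕ}

/-- `p` is an occurrence of `m` in `v` at which, if the least period `d` of `m` is less than `H`,
the `d`-periodicity of `m` breaks within the `d` letters to the left of the occurrence. -/
def LeftMarked (m : List A) (H : ℕ) (v : List A) (p : ℕ) : Prop :=
  OccursAt m v p ∧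
    (minPeriod m < H → ¬PeriodicOn v (minPeriod m) (p - minPeriod m) (p + m.length))

/-- `p` is an occurrence of `m` in `v` at which, if the least period `d` of `m` is less than `H`,
the `d`-periodicity of `m` breaks within the `d` letters to the right of the occurrence. -/
def RightMarked (m : List A) (H : ℕ) (v : List A) (p : ℕ) : Prop :=
  OccursAt m v p ∧
    (minPeriod m < H → ¬PeriodicOn v (minPeriod m) p (p + m.length + minPeriod m))

/-- A property of positions in words that persists when the word is extended, and that selects in
each word positions at distance at least `H` from each other. -/
structure IsMarking (Q : List A → ℕ → Prop) (H : ℕ) : Prop where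
  append : ∀ {e : List A} {p : ℕ}, Q e p → ∀ l r, Q (l ++ e ++ r) (l.length + p)
  separated : ∀ {v : List A} {p q : ℕ}, Q v p → Q v q → p < q → p + H ≤ q

lemma isMarking_leftMarked (hH : 0 < H) (hm : 2 * H ≤ m.length) :
    IsMarking (LeftMarked m H) H where
  append := by
    rintro e p ⟨hocc, hbreak⟩ l r
    refine ⟨hocc.append l r, fun hd hper => hbreak hd (PeriodicOn.of_append (l := l) (r := r) ?_)⟩
    exact hper.mono (by omega) (by omega)
  separated := by
    rintro v p q ⟨hp, -⟩ ⟨hq, hbreak⟩ hpq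
    by_contra! hclose
    have hd := hp.minPeriod_le_sub hq hpq
    have hm' : m ≠ [] := List.ne_nil_of_length_pos (by omega)
    exact hbreak (by omega)
      ((hp.periodicOn_minPeriod_of_overlap hq hm' (by omega)).mono (by omega) le_rfl)

lemma isMarking_rightMarked (hH : 0 < H) (hm : 2 * H ≤ m.length) :
    IsMarking (RightMarked m H) H where
  append := by
    rintro e p ⟨hocc, hbreak⟩ l r
    refine ⟨hocc.append l r, fun hd hper => hbreak hd (PeriodicOn.of_append (l := l) (r := r) ?_)⟩
    exact hper.mono le_rfl (by omega)
  separated := by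
    rintro v p q ⟨hp, hbreak⟩ ⟨hq, -⟩ hpq
    by_contra! hclose
    have hd := hp.minPeriod_le_sub hq hpq
    have hm' : m ≠ [] := List.ne_nil_of_length_pos (by omega)
    exact hbreak (by omega)
      ((hp.periodicOn_minPeriod_of_overlap hq hm' (by omega)).mono le_rfl (by omega))

lemma OccursAt.periodicOn_zero_of_forall_not_leftMarked (h : OccursAt m v p) (hm : m ≠ [])
    (hv : ∀ q, ¬LeftMarked m H v q) : PeriodicOn v (minPeriod m) 0 (p + m.length) := by
  induction p using Nat.strong_induction_on with
  | _ p ih =>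
    have hd := minPeriod_pos hm
    have hdm := minPeriod_le_length hm
    have hper : PeriodicOn v (minPeriod m) (p - minPeriod m) (p + m.length) := by
      by_contra hbreak
      exact hv p ⟨h, fun _ => hbreak⟩
    obtain hp | hp := le_total p (minPeriod m)
    · exact hper.mono (by omega) le_rfl
    · exact (ih _ (by omega) (h.sub_of_periodicOn hm hper hp)).trans hper (by omega)

lemma OccursAt.exists_maximal (h : OccursAt m v p) (hm : m ≠ []) :
    ∃ q, OccursAt m v q ∧ ∀ q', OccursAt m v q' → q' ≤ q := by
  have hbdd : BddAbove {q | OccursAt m v q} :=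
    ⟨v.length, fun q hq => by have := OccursAt.add_length_le hq hm; omega⟩
  exact ⟨_, Nat.sSup_mem ⟨p, h⟩ hbdd, fun q' hq' => le_csSup hbdd hq'⟩

lemma OccursAt.rightMarked_or_periodicOn (h : OccursAt m v p) :
    RightMarked m H v p ∨ PeriodicOn v (minPeriod m) p v.length ∨
      p + m.length + minPeriod m ≤ v.length ∧ OccursAt m v (p + minPeriod m) := by
  by_cases hper : PeriodicOn v (minPeriod m) p (p + m.length + minPeriod m)
  · right
    by_cases hv : p + m.length + minPeriod m ≤ v.length
    · exact Or.inr ⟨hv, h.add_of_periodicOn hper hv⟩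
    · exact Or.inl (hper.mono le_rfl (by omega))
  · exact Or.inl ⟨h, fun _ => hper⟩

lemma OccursAt.exists_leftMarked_or_rightMarked (h : OccursAt m v p) (hm : m ≠ []) :
    ∃ q, OccursAt m v q ∧
      (LeftMarked m H v q ∨ PeriodicOn v (minPeriod m) 0 (q + m.length)) ∧
      (RightMarked m H v q ∨ PeriodicOn v (minPeriod m) q v.length ∨
        LeftMarked m H v q ∧ q + m.length + minPeriod m ≤ v.length) := by
  by_cases hL : ∃ q, LeftMarked m H v q
  · obtain ⟨q, hq⟩ := hL
    exact ⟨q, hq.1, Or.inl hq,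
      hq.1.rightMarked_or_periodicOn.imp_right (Or.imp_right fun h' => ⟨hq, h'.1⟩)⟩
  · obtain ⟨q, hq, hmax⟩ := h.exists_maximal hm
    refine ⟨q, hq, Or.inr (hq.periodicOn_zero_of_forall_not_leftMarked hm (not_exists.1 hL)), ?_⟩
    refine hq.rightMarked_or_periodicOn.imp_right (Or.imp_right fun ⟨_, hnext⟩ => ?_)
    have := hmax _ hnext
    have := minPeriod_pos hm
    omega

end Marking

section Windows

variable {F : Set (List A)} {Q : List A → ℕ → Prop} {m u s : List A} {H n j p : ℕ} {c : ℤ}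

/-- A language in which every word can be extended by a letter on either side. -/
structure IsBiextendable (F : Set (List A)) : Prop where
  exists_cons : ∀ u ∈ F, ∃ x, x :: u ∈ F
  exists_concat : ∀ u ∈ F, ∃ x, u ++ [x] ∈ F

lemma IsBiextendable.exists_append_left (hF : IsBiextendable F) (hu : u ∈ F) (k : ℕ) :
    ∃ l : List A, l.length = k ∧ l ++ u ∈ F := by
  induction k with
  | zero => exact ⟨[], rfl, hu⟩
  | succ k ih =>
    obtain ⟨l, rfl, hl⟩ := ih
    obtain ⟨x, hx⟩ := hF.exists_cons _ hl
    exact ⟨x :: l, rfl, hx⟩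

lemma IsBiextendable.exists_append_right (hF : IsBiextendable F) (hu : u ∈ F) (k : ℕ) :
    ∃ r : List A, r.length = k ∧ u ++ r ∈ F := by
  induction k with
  | zero => exact ⟨[], rfl, by rwa [List.append_nil]⟩
  | succ k ih =>
    obtain ⟨r, rfl, hr⟩ := ih
    obtain ⟨x, hx⟩ := hF.exists_concat _ hr
    exact ⟨r ++ [x], by simp, by rwa [← List.append_assoc]⟩

/-- The words of length `n` found at offset `c` from an occurrence of `m` in a word having the
least period of `m` as a period. -/
def periodicWindows (m : List A) (n : ℕ) (c : ℤ) : Set (List A) :=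
  {s | s.length = n ∧ ∃ (w : List A) (p i : ℕ), w.HasPeriod (minPeriod m) ∧ OccursAt m w p ∧
    (i : ℤ) = p + c ∧ OccursAt s w i}

/-- The words of length `n` found at offset `c` from a position marked by `Q` in a word of `F`.
The bounds on the position and on the length of that word leave room to place it in a word of
length `3 * n` with the mark at any of the positions `n - H, …, n - 1`. -/
def markedWindows (F : Set (List A)) (Q : List A → ℕ → Prop) (H n : ℕ) (c : ℤ) :
    Set (List A) :=
  {s | s.length = n ∧ ∃ e ∈ F, ∃ p i : ℕ, Q e p ∧ p + H ≤ n ∧ e.length ≤ p + n + H ∧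
    (i : ℤ) = p + c ∧ OccursAt s e i}

lemma periodicWindows_subsingleton (hm : m ≠ []) : (periodicWindows m n c).Subsingleton := by
  have getElem?_eq : ∀ {s}, s ∈ periodicWindows m n c → ∀ x < n,
      s[x]? = m[((x + c) % minPeriod m).toNat]? := by
    rintro s ⟨rfl, w, p, i, hw, hp, hi, hs⟩ x hx
    have hs' := hs.add_length_le (List.ne_nil_of_length_pos (by omega))
    rw [← occursAt_iff_getElem?.1 hs x hx,
      hp.getElem?_eq_of_hasPeriod hw (minPeriod_pos hm) (minPeriod_le_length hm) (by omega)]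
    congr 3
    push_cast
    omega
  intro s hs t ht
  refine List.ext_getElem? fun x => ?_
  by_cases hx : x < n
  · rw [getElem?_eq hs x hx, getElem?_eq ht x hx]
  · rw [List.getElem?_eq_none (by have := hs.1; omega),
      List.getElem?_eq_none (by have := ht.1; omega)]

lemma exists_mark_of_mem_markedWindows (hF : IsBiextendable F) (hQ : IsMarking Q H)
    (hs : s ∈ markedWindows F Q H n c) (hj : j < H) :
    ∃ v ∈ F, v.length = 3 * n ∧ Q v (n - H + j) ∧
      ∃ i : ℕ, (i : ℤ) = (n - H + j : ℕ) + c ∧ OccursAt s v i := by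
  obtain ⟨-, e, he, p, i, hp, hpn, hen, hi, hse⟩ := hs
  obtain ⟨l, hl, hle⟩ := hF.exists_append_left he (n - H + j - p)
  obtain ⟨r, hr, hler⟩ := hF.exists_append_right hle (3 * n - (l ++ e).length)
  have hlp : l.length + p = n - H + j := by omega
  refine ⟨_, hler, ?_, hlp ▸ hQ.append hp l r, l.length + i, by omega, hse.append l r⟩
  rw [List.length_append, hr, List.length_append]
  omega

/-- Sliding the mark through `H` consecutive positions sends the pairs `(s, j)` injectively to the
words of length `3 * n`: the separation of the marks recovers `j`, and then `s`. -/
lemma ncard_markedWindows_mul_le [Finite A] (hF : IsBiextendable F) (hQ : IsMarking Q H) :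
    (markedWindows F Q H n c).ncard * H ≤ complexity F (3 * n) := by
  choose! f hfF hfn hfQ i hi hf using
    fun s (hs : s ∈ markedWindows F Q H n c) j (hj : j < H) =>
      exists_mark_of_mem_markedWindows hF hQ hs hj
  have hfin : {u ∈ F | u.length = 3 * n}.Finite :=
    (List.finite_length_eq A (3 * n)).subset fun _ h => h.2
  calc (markedWindows F Q H n c).ncard * H
      = (markedWindows F Q H n c ×ˢ Set.Iio H).ncard := by rw [Set.ncard_prod, Set.ncard_Iio_nat]
    _ ≤ complexity F (3 * n) := Set.ncard_le_ncard_of_injOn (fun x => f x.1 x.2)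
        (fun x hx => ⟨hfF _ hx.1 _ hx.2, hfn _ hx.1 _ hx.2⟩) ?_ hfin
  rintro ⟨s, j⟩ ⟨hs, hj⟩ ⟨t, k⟩ ⟨ht, hk⟩ heq
  simp only [Set.mem_Iio] at hs hj ht hk heq
  have hjQ := hfQ s hs j hj
  have hkQ := hfQ t ht k hk
  rw [← heq] at hkQ
  obtain rfl : j = k := by
    rcases lt_trichotomy j k with hjk | hjk | hjk
    · have := hQ.separated hjQ hkQ (by omega)
      omega
    · exact hjk
    · have := hQ.separated hkQ hjQ (by omega)
      omega
  have hik : i s j = i t j := by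
    have := hi s hs j hj
    have := hi t ht j hk
    omega
  have hst : s = t := (hf s hs j hj).eq_of_length_eq
    (by rw [heq, hik]; exact hf t ht j hk) (hs.1.trans ht.1.symm)
  rw [hst]

/-- The words of length `n` found at offset `c` from the point at distance `H` inside an
occurrence of `m`, this occurrence being either marked or part of a periodic word. -/
def markerWindows (F : Set (List A)) (m : List A) (H n : ℕ) (c : ℤ) : Set (List A) :=
  periodicWindows m n (H + c) ∪
    (markedWindows F (LeftMarked m H) H n (H + c) ∪ markedWindows F (RightMarked m H) H n (H + c))

lemma length_of_mem_markerWindows (hs : s ∈ markerWindows F m H n c) : s.length = n := by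
  obtain h | h | h := hs <;> exact h.1

lemma ncard_markerWindows_mul_le [Finite A] (hF : IsBiextendable F) (hH : 0 < H)
    (hm : 2 * H ≤ m.length) :
    (markerWindows F m H n c).ncard * H ≤ H + 2 * complexity F (3 * n) := by
  have hm' : m ≠ [] := List.ne_nil_of_length_pos (by omega)
  have hsub := periodicWindows_subsingleton (n := n) (c := H + c) hm'
  have hper := (Set.ncard_le_one hsub.finite).2 fun _ hs _ ht => hsub hs ht
  have hleft := ncard_markedWindows_mul_le (n := n) (c := H + c) hF (isMarking_leftMarked hH hm)
  have hright := ncard_markedWindows_mul_le (n := n) (c := H + c) hF (isMarking_rightMarked hH hm)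
  grw [markerWindows, Set.ncard_union_le, Set.ncard_union_le, add_mul, add_mul, hper, hleft, hright]
  omega

lemma ncard_markerWindows_le [Finite A] (hF : IsBiextendable F) (hH : 0 < H)
    (hm : m.length = 2 * H) :
    ((markerWindows F m H n c).ncard : ℝ) ≤ 1 + 4 * complexity F (3 * n) / m.length := by
  have hH' : (0 : ℝ) < H := by exact_mod_cast hH
  have h : ((markerWindows F m H n c).ncard * H : ℝ) ≤ H + 2 * complexity F (3 * n) := by
    exact_mod_cast ncard_markerWindows_mul_le hF hH hm.ge
  calc ((markerWindows F m H n c).ncard : ℝ)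
      ≤ (H + 2 * complexity F (3 * n)) / H := (le_div_iff₀ hH').2 h
    _ = 1 + 4 * complexity F (3 * n) / m.length := by rw [hm]; push_cast; field_simp; ring

lemma OccursAt.take_mem_markerWindows (hF : IsFactorial F) (hm : m.length = 2 * H) (hm' : m ≠ [])
    (hu : u ∈ F) (h : OccursAt m u p)
    (hp : LeftMarked m H u p ∨ PeriodicOn u (minPeriod m) 0 (p + m.length)) :
    u.take (p + H) ∈ markerWindows F m H (p + H) (-(p + H : ℕ)) := by
  have hpu := h.add_length_le hm'
  have hlen : (u.take (p + H)).length = p + H := by rw [List.length_take]; omega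
  have hoffset : ((0 : ℕ) : ℤ) = p + (H + -(p + H : ℕ)) := by push_cast; ring
  have hocc : OccursAt (u.take (p + H)) (u.take (p + m.length)) 0 := by
    rw [OccursAt, List.drop_zero]
    exact List.take_prefix_take_left (by omega)
  obtain hleft | hper := hp
  · refine Or.inr (Or.inl ⟨hlen, u.take (p + m.length), ?_, p, 0, ⟨h.take, fun hd => ?_⟩, le_rfl,
      ?_, hoffset, hocc⟩)
    · exact hF u hu _ (List.take_prefix _ _).isInfix
    · simpa only [PeriodicOn, List.take_take, min_self] using hleft.2 hd
    · rw [List.length_take]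
      omega
  · exact Or.inl ⟨hlen, u.take (p + m.length), p, 0, hper, h.take, hoffset, hocc⟩

lemma OccursAt.drop_mem_markerWindows (hF : IsFactorial F) (hm : m.length = 2 * H) (hm' : m ≠ [])
    (hu : u ∈ F) (h : OccursAt m u p)
    (hp : RightMarked m H u p ∨ PeriodicOn u (minPeriod m) p u.length ∨
        LeftMarked m H u p ∧ p + m.length + minPeriod m ≤ u.length) :
    u.drop (p + H) ∈ markerWindows F m H (u.length - (p + H)) 0 := by
  have hpu := h.add_length_le hm'
  have hlen : (u.drop (p + H)).length = u.length - (p + H) := List.length_drop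
  have hdrop : ∀ k, u.drop k ∈ F := fun k => hF u hu _ (List.drop_suffix _ _).isInfix
  have hoccurs : ∀ {s k q}, k + q = p → OccursAt s u p → OccursAt s (u.drop k) q := by
    rintro s k q rfl hs
    exact occursAt_drop.2 hs
  have hocc : ∀ {k q}, k + q = p + H → OccursAt (u.drop (p + H)) (u.drop k) q := by
    rintro k q hkq
    rw [occursAt_drop, hkq, OccursAt]
  obtain hright | hper | ⟨hleft, hd⟩ := hp
  · refine Or.inr (Or.inr ⟨hlen, u.drop p, hdrop p, 0, H, ⟨hoccurs rfl h, fun hd => ?_⟩, by omega,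
      ?_, by simp, hocc rfl⟩)
    · simpa only [periodicOn_drop, add_zero, zero_add, add_assoc] using hright.2 hd
    · rw [List.length_drop]
      omega
  · refine Or.inl ⟨hlen, u.drop p, 0, H, ?_, hoccurs rfl h, by simp, hocc rfl⟩
    simpa only [PeriodicOn, List.take_length] using hper
  · set d := minPeriod m
    have hk : p - d + (p - (p - d)) = p := by omega
    refine Or.inr (Or.inl ⟨hlen, u.drop (p - d), hdrop _, p - (p - d), p - (p - d) + H,
      ⟨hoccurs hk h, fun hdH => ?_⟩, by omega, ?_, by simp, hocc (by omega)⟩)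
    · rw [periodicOn_drop, ← add_assoc, hk, show p - d + (p - (p - d) - d) = p - d by omega]
      exact hleft.2 hdH
    · rw [List.length_drop]
      omega

lemma exists_take_drop_mem_markerWindows (hF : IsFactorial F) (hm : m.length = 2 * H) (hH : 0 < H)
    (hu : u ∈ F) (hmu : m <:+: u) :
    ∃ p, p + 2 * H ≤ u.length ∧ u.take (p + H) ∈ markerWindows F m H (p + H) (-(p + H : ℕ)) ∧
      u.drop (p + H) ∈ markerWindows F m H (u.length - (p + H)) 0 := by
  have hm' : m ≠ [] := List.ne_nil_of_length_pos (by omega)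
  obtain ⟨_, h⟩ := exists_occursAt_of_isInfix hmu
  obtain ⟨p, hp, hleft, hright⟩ := h.exists_leftMarked_or_rightMarked (H := H) hm'
  exact ⟨p, hm ▸ hp.add_length_le hm', hp.take_mem_markerWindows hF hm hm' hu hleft,
    hp.drop_mem_markerWindows hF hm hm' hu hright⟩

end Windows

section MarkerLanguage

variable {F M X : Set (List A)} {D n k : ℕ} {c : ℕ → ℤ}

lemma ncard_biUnion_le_complexity_mul [Finite A] {Y : List A → Set (List A)} {B : ℝ}
    (hY : ∀ m : List A, m.length = n → ((Y m).ncard : ℝ) ≤ B) :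
    ((⋃ m ∈ {m ∈ M | m.length = n}, Y m).ncard : ℝ) ≤ complexity M n * B := by
  have hfin : {m ∈ M | m.length = n}.Finite :=
    (List.finite_length_eq A n).subset fun _ h => h.2
  calc ((⋃ m ∈ {m ∈ M | m.length = n}, Y m).ncard : ℝ)
      ≤ ∑ m ∈ hfin.toFinset, ((Y m).ncard : ℝ) := by
        have := hfin.toFinset.set_ncard_biUnion_le Y
        simp only [hfin.mem_toFinset] at this
        exact_mod_cast this
    _ ≤ hfin.toFinset.card • B :=
        Finset.sum_le_card_nsmul _ _ _ fun m hm => hY m (hfin.mem_toFinset.1 hm).2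
    _ = complexity M n * B := by
        rw [nsmul_eq_mul, complexity, Set.ncard_eq_toFinset_card _ hfin]

lemma complexity_le_markerBound [Finite A] {Y : ℕ → List A → Set (List A)}
    (hX : ∀ s ∈ X, s.length = n → ∃ k, n < 2 * D * 2 ^ k ∧ 2 ^ k ≤ 2 * n ∧
      ∃ m ∈ M, m.length = 2 ^ k ∧ s ∈ Y k m)
    (hYlen : ∀ k m, ∀ s ∈ Y k m, s.length = n)
    (hY : ∀ k, n < 2 * D * 2 ^ k → ∀ m : List A, m.length = 2 ^ k →
      ((Y k m).ncard : ℝ) ≤ 1 + 4 * complexity F (3 * n) / 2 ^ k) :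
    (complexity X n : ℝ) ≤ markerBound M F D n := by
  set K := (Finset.range (2 * n + 2)).filter fun k => n < 2 * D * 2 ^ k ∧ 2 ^ k ≤ 2 * n
  set U : Set (List A) := ⋃ k ∈ K, ⋃ m ∈ {m ∈ M | m.length = 2 ^ k}, Y k m with hU
  have hUfin : U.Finite := (List.finite_length_eq A n).subset fun s hs => by
    simp only [hU, Set.mem_iUnion] at hs
    obtain ⟨k, -, m, -, hs⟩ := hs
    exact hYlen k m s hs
  have hsub : {s ∈ X | s.length = n} ⊆ U := by
    rintro s ⟨hs, hsn⟩
    obtain ⟨k, hnk, hkn, m, hm, hmk, hsY⟩ := hX s hs hsn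
    have hkK : k ∈ K := by
      have := Nat.lt_two_pow_self (n := k)
      exact Finset.mem_filter.2 ⟨Finset.mem_range.2 (by omega), hnk, hkn⟩
    exact Set.mem_biUnion hkK (Set.mem_biUnion ⟨hm, hmk⟩ hsY)
  calc (complexity X n : ℝ)
      ≤ U.ncard := by exact_mod_cast Set.ncard_le_ncard hsub hUfin
    _ ≤ ∑ k ∈ K, ((⋃ m ∈ {m ∈ M | m.length = 2 ^ k}, Y k m).ncard : ℝ) := by
        exact_mod_cast K.set_ncard_biUnion_le _
    _ ≤ markerBound M F D n := Finset.sum_le_sum fun k hk =>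
        ncard_biUnion_le_complexity_mul (hY k (Finset.mem_filter.1 hk).2.1)

/-- The words of length less than `2 * D`, together with the windows at offset `c n` of the markers
of length `2 ^ k`, where `n` is the length of the window and `k` is in the range of summation of
`markerBound`. Windows at offset `-n` end at the middle of a marker, windows at offset `0` start
there. -/
def markerLanguage (F M : Set (List A)) (D : ℕ) (c : ℕ → ℤ) : Set (List A) :=
  {s | s.length < 2 * D ∨ ∃ k, s.length < 2 * D * 2 ^ k ∧ 2 ^ k ≤ 2 * s.length ∧
    ∃ m ∈ M, m.length = 2 ^ k ∧ s ∈ markerWindows F m (2 ^ k / 2) s.length (c s.length)}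

lemma two_pow_eq_two_mul_half (hn : 2 * D ≤ n) (hk : n < 2 * D * 2 ^ k) :
    2 ^ k = 2 * (2 ^ k / 2) := by
  have hk0 : k ≠ 0 := by
    rintro rfl
    omega
  exact (Nat.mul_div_cancel' (dvd_pow_self 2 hk0)).symm

lemma complexity_markerLanguage_le [Finite A] (hF : IsBiextendable F) (hn : 2 * D ≤ n) :
    (complexity (markerLanguage F M D c) n : ℝ) ≤ markerBound M F D n := by
  refine complexity_le_markerBound (Y := fun k m => markerWindows F m (2 ^ k / 2) n (c n)) ?_
    (fun k m s => length_of_mem_markerWindows) fun k hk m hm => ?_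
  · rintro s (hs | hs) rfl
    · omega
    · exact hs
  · have hhalf := two_pow_eq_two_mul_half hn hk
    have hpos := Nat.two_pow_pos k
    have := ncard_markerWindows_le (n := n) (c := c n) hF (by omega) (hm.trans hhalf)
    rwa [hm, Nat.cast_pow, Nat.cast_ofNat] at this

lemma MarkerSet.pos (hM : MarkerSet D M F) (hF : F.Nonempty) : 0 < D := by
  obtain ⟨u, hu⟩ := hF
  by_contra! hD
  obtain ⟨v, -, hv, hvu⟩ := hM (u.length + 1) (by omega) u hu (by simp [Nat.le_zero.1 hD])
  have := hvu.length_le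
  omega

lemma exists_mul_two_pow_le_lt (hD : 0 < D) (hn : D ≤ n) :
    ∃ k, D * 2 ^ k ≤ n ∧ n < 2 * D * 2 ^ k := by
  obtain ⟨k, hkn, hnk⟩ := exists_nat_pow_near (x := n / D) (y := 2) (Nat.div_pos hn hD) one_lt_two
  refine ⟨k, ?_, ?_⟩
  · rw [mul_comm]
    exact (Nat.le_div_iff_mul_le hD).1 hkn
  · rw [Nat.div_lt_iff_lt_mul hD] at hnk
    exact hnk.trans_eq (by ring)

lemma MarkerSet.subset_prodL (hM : MarkerSet D M F) (hF : IsFactorial F) :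
    F ⊆ prodL (markerLanguage F M D fun n => -n) (markerLanguage F M D fun _ => 0) := by
  intro u hu
  have hD := hM.pos ⟨u, hu⟩
  obtain hu2 | hu2 := lt_or_ge u.length (2 * D)
  · exact ⟨u, Or.inl hu2, [], Or.inl (by simpa using hD), u.append_nil.symm⟩
  obtain ⟨k, hku, huk⟩ := exists_mul_two_pow_le_lt hD (by omega : D ≤ u.length)
  obtain ⟨m, hmM, hm, hmu⟩ := hM (2 ^ k) Nat.one_le_two_pow u hu hku
  have hhalf := two_pow_eq_two_mul_half hu2 huk
  have hpos := Nat.two_pow_pos k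
  obtain ⟨p, hp, hs, ht⟩ :=
    exists_take_drop_mem_markerWindows hF (hm.trans hhalf) (by omega) hu hmu
  have hslen := length_of_mem_markerWindows hs
  have htlen := length_of_mem_markerWindows ht
  exact ⟨u.take (p + 2 ^ k / 2), Or.inr ⟨k, by omega, by omega, m, hmM, hm, by
      simpa only [hslen] using hs⟩,
    u.drop (p + 2 ^ k / 2), Or.inr ⟨k, by omega, by omega, m, hmM, hm, by
      simpa only [htlen] using ht⟩,
    (List.take_append_drop _ _).symm⟩

theorem stmt12_general [Finite A] (hF : IsFactorial F) (hF' : IsBiextendable F)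
    (hM : MarkerSet D M F) :
    ∃ S T : Set (List A), F ⊆ prodL S T ∧
      ∀ n : ℕ, 2 * D ≤ n →
        (complexity S n : ℝ) ≤ markerBound M F D n ∧
        (complexity T n : ℝ) ≤ markerBound M F D n :=
  ⟨_, _, hM.subset_prodL hF, fun _ hn =>
    ⟨complexity_markerLanguage_le hF' hn, complexity_markerLanguage_le hF' hn⟩⟩

end MarkerLanguage

section InfiniteWords

variable {ι : Type*} {seg : ι → ℕ → List A}

lemma isFactorial_setOf_segment (hlen : ∀ i n, (seg i n).length = n)
    (hadd : ∀ i a b, ∃ j, seg i (a + b) = seg i a ++ seg j b) :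
    IsFactorial {u | ∃ i n, u = seg i n} := by
  rintro _ ⟨i, n, rfl⟩ v ⟨l, r, h⟩
  have hn : n = l.length + v.length + r.length := by
    rw [← hlen i n, ← h, List.length_append, List.length_append]
  obtain ⟨_, hr⟩ := hadd i (l.length + v.length) r.length
  obtain ⟨j, hv⟩ := hadd i l.length v.length
  rw [hn, hr, hv] at h
  obtain ⟨hlv, -⟩ := List.append_inj h (by simp only [List.length_append, hlen])
  exact ⟨j, v.length, (List.append_inj hlv (hlen _ _).symm).2⟩

lemma length_wordSeg (x : ℕ → A) (i n : ℕ) : (wordSeg x i n).length = n := by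
  simp [wordSeg]

lemma wordSeg_add (x : ℕ → A) (i a b : ℕ) :
    wordSeg x i (a + b) = wordSeg x i a ++ wordSeg x (i + a) b := by
  simp [wordSeg, List.range_add, Function.comp_def, add_assoc]

lemma wordSeg_one (x : ℕ → A) (i : ℕ) : wordSeg x i 1 = [x i] := rfl

/-- In the definition of `wordSegZ` the index is an integer: it ranges over the list
`List.range n` cast to `List ℤ` by the list monad. -/
lemma wordSegZ_eq_map (x : ℤ → A) (i : ℤ) (n : ℕ) :
    wordSegZ x i n = (List.range n).map fun j : ℕ => x (i + j) := by
  simp [wordSegZ, ← List.map_eq_flatMap, Function.comp_def]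

lemma length_wordSegZ (x : ℤ → A) (i : ℤ) (n : ℕ) : (wordSegZ x i n).length = n := by
  simp [wordSegZ_eq_map]

lemma wordSegZ_add (x : ℤ → A) (i : ℤ) (a b : ℕ) :
    wordSegZ x i (a + b) = wordSegZ x i a ++ wordSegZ x (i + a) b := by
  simp [wordSegZ_eq_map, List.range_add, Function.comp_def, add_assoc]

lemma wordSegZ_one (x : ℤ → A) (i : ℤ) : wordSegZ x i 1 = [x i] := by
  simp [wordSegZ_eq_map]

lemma isFactorial_facZ (y : ℤ → A) : IsFactorial (FacZ y) :=
  isFactorial_setOf_segment (length_wordSegZ y) fun i a b => ⟨i + a, wordSegZ_add y i a b⟩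

lemma isFactorial_fac (y : ℕ → A) : IsFactorial (Fac y) :=
  isFactorial_setOf_segment (length_wordSeg y) fun i a b => ⟨i + a, wordSeg_add y i a b⟩

lemma isBiextendable_facZ (y : ℤ → A) : IsBiextendable (FacZ y) where
  exists_cons := by
    rintro _ ⟨i, n, rfl⟩
    refine ⟨y (i - 1), i - 1, 1 + n, ?_⟩
    rw [wordSegZ_add, wordSegZ_one, Nat.cast_one, sub_add_cancel, List.singleton_append]
  exists_concat := by
    rintro _ ⟨i, n, rfl⟩
    exact ⟨y (i + n), i, n + 1, by rw [wordSegZ_add, wordSegZ_one]⟩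

lemma Recurrent.isBiextendable_fac {y : ℕ → A} (hy : Recurrent y) : IsBiextendable (Fac y) where
  exists_cons := by
    intro u hu
    obtain ⟨i, hi, h⟩ := hy u hu 1
    refine ⟨y (i - 1), i - 1, 1 + u.length, ?_⟩
    rw [wordSeg_add, wordSeg_one, Nat.sub_add_cancel hi, ← h, List.singleton_append]
  exists_concat := by
    rintro _ ⟨i, n, rfl⟩
    exact ⟨y (i + n), i, n + 1, by rw [wordSeg_add, wordSeg_one]⟩

end InfiniteWords

/-- for `y` a two-sided word, or a recurrent one-sided word, and `M` a
`D`-marker set for `y`, there are `S, T` with `Fac(y) ⊆ S T` and, for `n ≥ 2D`,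
`p_S(n), p_T(n) ≤ Σ_{k ∈ I_n ∩ ℕ} p_M(2^k)(1 + 4 p_y(3n)/2^k)`,
`I_n = (log₂(n/(2D)), log₂(2n)]`. -/
theorem stmt12 (A : Type u) [Fintype A] [Nonempty A] (D : ℕ) (hD : 0 < D) :
    (∀ (y : ℤ → A) (M : Set (List A)), MarkerSet D M (FacZ y) →
      ∃ S T : Set (List A), FacZ y ⊆ prodL S T ∧
        ∀ n : ℕ, 2 * D ≤ n →
          (complexity S n : ℝ) ≤ markerBound M (FacZ y) D n ∧
          (complexity T n : ℝ) ≤ markerBound M (FacZ y) D n) ∧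
    (∀ y : ℕ → A, Recurrent y → ∀ M : Set (List A), MarkerSet D M (Fac y) →
      ∃ S T : Set (List A), Fac y ⊆ prodL S T ∧
        ∀ n : ℕ, 2 * D ≤ n →
          (complexity S n : ℝ) ≤ markerBound M (Fac y) D n ∧
          (complexity T n : ℝ) ≤ markerBound M (Fac y) D n) := by
  exact ⟨fun y _ hM => stmt12_general (isFactorial_facZ y) (isBiextendable_facZ y) hM,
    fun y hy _ hM => stmt12_general (isFactorial_fac y) hy.isBiextendable_fac hM⟩
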